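/- arXiv:2008.10101 — 3 statements merged into one kernel-verified Lean document; each statement's English description precedes it below -/
import Mathlib

section
/- Let (J, 𝒜) be a standard Borel space, let v : J × J → ℝ be a bounded nonnegative Borel measurable function, let c ∈ ℝ, and let φ, ψ be finite nonnegative Borel measures on J × J with φ ≤ ψ. There exists a circulation α with φ ≤ α ≤ ψ and ∫ v dα = c if and only if for every potential F the following three inequalities hold: ∫ (F + v)₊ dψ ≥ ∫ (F + v)₋ dφ + c, ∫ (F − v)₊ dψ ≥ ∫ (F − v)₋ dφ − c, and ∫ F₊ dψ ≥ ∫ F₋ dφ, where g₊ and g₋ denote the positive and negative parts of the function g. -/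
open MeasureTheory Set

/-- Integral of a function against a finite signed measure, via the Jordan decomposition. -/
noncomputable def signedIntegral {X : Type*} [MeasurableSpace X]
    (α : SignedMeasure X) (f : X → ℝ) : ℝ :=
  (∫ x, f x ∂α.toJordanDecomposition.posPart) - ∫ x, f x ∂α.toJordanDecomposition.negPart

/-!
If `φ ≤ μ ≤ ψ`, then `∫ u dμ ≤ ∫ u₊ dψ - ∫ u₋ dφ` for every `ψ`-integrable `u`, and a
circulation integrates every potential to zero; this gives necessity of the three inequalities.

Conversely, `∫ u₊ dψ - ∫ u₋ dφ = ∫ u dφ + ∫ u₊ d(ψ - φ)`. By homogeneity the three inequalities say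
that on the functions `F + t v` the functional `F + t v ↦ t c - ∫ (F + t v) dφ` is dominated by the
sublinear functional `u ↦ ∫ u₊ d(ψ - φ)` of `L¹(ψ - φ)`; in particular it is well defined. Its
Hahn–Banach extension to `L¹(ψ - φ)` is integration against a measure at most `ψ - φ`, because a
finitely additive set function dominated by a finite measure is countably additive. Adding `φ` to
that measure gives the circulation.
-/

theorem exists_dual_comp_eq_and_le_sublinear {W E : Type*} [AddCommGroup W] [Module ℝ W]
    [AddCommGroup E] [Module ℝ E] (A : W →ₗ[ℝ] E) (ℓ : W →ₗ[ℝ] ℝ) (N : E → ℝ)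
    (N_smul : ∀ c : ℝ, 0 < c → ∀ x, N (c • x) = c * N x) (N_add : ∀ x y, N (x + y) ≤ N x + N y)
    (hℓ : ∀ w, ℓ w ≤ N (A w)) :
    ∃ L : E →ₗ[ℝ] ℝ, L ∘ₗ A = ℓ ∧ ∀ x, L x ≤ N x := by
  have N_zero : N 0 = 0 := by linarith [N_smul 2 two_pos 0, congrArg N (smul_zero (2 : ℝ) (A := E))]
  have ker_le : ℓ ∈ (LinearMap.ker A).dualAnnihilator := by
    refine (Submodule.mem_dualAnnihilator ℓ).2 fun w (hw : A w = 0) => ?_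
    have h_pos := hℓ w
    have h_neg := hℓ (-w)
    rw [map_neg, map_neg, hw, neg_zero, N_zero] at h_neg
    rw [hw, N_zero] at h_pos
    linarith
  rw [← LinearMap.range_dualMap_eq_dualAnnihilator_ker] at ker_le
  obtain ⟨g, hg⟩ := ker_le
  have hgA : ∀ w, g (A w) = ℓ w := LinearMap.congr_fun hg
  obtain ⟨L, hLg, hLN⟩ := exists_extension_of_le_sublinear
    ⟨LinearMap.range A, g.domRestrict (LinearMap.range A)⟩ N N_smul N_add <| by
      rintro ⟨_, w, rfl⟩
      exact (hgA w).trans_le (hℓ w)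
  exact ⟨L, LinearMap.ext fun w => (hLg ⟨A w, w, rfl⟩).trans (hgA w), hLN⟩

section MeasuresBetween

variable {X : Type*} [MeasurableSpace X]

theorem exists_toSignedMeasure_eq_of_nonneg {α : SignedMeasure X} (hα : 0 ≤ α) :
    ∃ (μ : Measure X) (_ : IsFiniteMeasure μ), μ.toSignedMeasure = α :=
  ⟨_, inferInstance, α.toMeasureOfZeroLE_toSignedMeasure
    ((VectorMeasure.le_restrict_univ_iff_le 0 α).2 hα)⟩

theorem signedIntegral_toSignedMeasure (μ : Measure X) [IsFiniteMeasure μ] (u : X → ℝ) :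
    signedIntegral μ.toSignedMeasure u = ∫ x, u x ∂μ := by
  have jordan : μ.toSignedMeasure.toJordanDecomposition =
      ⟨μ, 0, Measure.MutuallySingular.zero_right⟩ :=
    SignedMeasure.toJordanDecomposition_eq (by simp [JordanDecomposition.toSignedMeasure])
  simp [signedIntegral, jordan]

theorem exists_measure_le_of_additive {ν : Measure X} [IsFiniteMeasure ν] (m : Set X → ℝ)
    (m_nonneg : ∀ s, MeasurableSet s → 0 ≤ m s) (m_le : ∀ s, MeasurableSet s → m s ≤ ν.real s)
    (m_union : ∀ s t, MeasurableSet s → MeasurableSet t → Disjoint s t →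
      m (s ∪ t) = m s + m t) :
    ∃ μ ≤ ν, ∀ s, MeasurableSet s → μ.real s = m s := by
  classical
  let α : SignedMeasure X := VectorMeasure.of_additive_of_le_measure (μ := ν)
    (fun s => if MeasurableSet s then m s else 0)
    (fun s => by
      split_ifs with hs
      · rw [Real.enorm_of_nonneg (m_nonneg s hs)]
        exact ENNReal.ofReal_le_of_le_toReal (m_le s hs)
      · simp)
    (fun s t hs ht hst => by simp only [hs, ht, hs.union ht, if_true, m_union s t hs ht hst])
    (fun s hs => if_neg hs)
  have α_apply : ∀ s, MeasurableSet s → α s = m s := fun s hs => if_pos hs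
  obtain ⟨μ, _, hμ⟩ := exists_toSignedMeasure_eq_of_nonneg (α := α)
    (VectorMeasure.le_iff.2 fun s hs => (m_nonneg s hs).trans_eq (α_apply s hs).symm)
  have μ_real : ∀ s, MeasurableSet s → μ.real s = m s := fun s hs => by
    rw [← α_apply s hs, ← hμ, Measure.toSignedMeasure_apply_measurable hs]
  refine ⟨μ, Measure.le_iff.2 fun s hs => ?_, μ_real⟩
  exact (ENNReal.toReal_le_toReal (measure_ne_top μ s) (measure_ne_top ν s)).1
    ((μ_real s hs).trans_le (m_le s hs))

variable {φ μ ν ψ : Measure X}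

theorem abs_le_norm_of_le_integral_max_zero {L : (X →₁[ν] ℝ) →ₗ[ℝ] ℝ}
    (hL : ∀ u, L u ≤ ∫ x, max (u x) 0 ∂ν) (u : X →₁[ν] ℝ) : |L u| ≤ ‖u‖ := by
  have le_norm : ∀ w, L w ≤ ‖w‖ := fun w => by
    rw [L1.norm_eq_integral_norm]
    exact (hL w).trans (integral_mono (L1.integrable_coeFn w).pos_part (L1.integrable_coeFn w).norm
      fun x => max_le (le_abs_self _) (abs_nonneg _))
  refine abs_le'.2 ⟨le_norm u, ?_⟩
  simpa only [map_neg, norm_neg] using le_norm (-u)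

theorem indicatorConstLp_eq_smul_one {p : ENNReal} {s : Set X} (hs : MeasurableSet s)
    (hνs : ν s ≠ ⊤) (c : ℝ) : indicatorConstLp p hs hνs c = c • indicatorConstLp p hs hνs 1 := by
  rw [indicatorConstLp, indicatorConstLp, ← MemLp.toLp_const_smul]
  congr 1
  ext x
  by_cases hx : x ∈ s <;> simp [hx]

theorem continuousLinearMap_ext_indicatorConstLp {p : ENNReal} [Fact (1 ≤ p)] (hp : p ≠ ⊤)
    {F : Type*} [NormedAddCommGroup F] [NormedSpace ℝ F] {L L' : Lp ℝ p ν →L[ℝ] F}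
    (h : ∀ (s : Set X) (hs : MeasurableSet s) (hνs : ν s ≠ ⊤),
      L (indicatorConstLp p hs hνs 1) = L' (indicatorConstLp p hs hνs 1)) : L = L' := by
  ext u
  induction u using Lp.induction hp with
  | indicatorConst c hs hνs =>
    rw [Lp.simpleFunc.coe_indicatorConst, indicatorConstLp_eq_smul_one, map_smul, map_smul, h]
  | add hf hg _ ihf ihg => rw [map_add, map_add, ihf, ihg]
  | isClosed => exact isClosed_eq L.continuous L'.continuous

/-- `∫ u₊ dψ - ∫ u₋ dφ`, the supremum of `∫ u dμ` over the measures `φ ≤ μ ≤ ψ`. -/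
noncomputable def upperIntegral (φ ψ : Measure X) (u : X → ℝ) : ℝ :=
  (∫ x, max (u x) 0 ∂ψ) - ∫ x, max (-u x) 0 ∂φ

theorem upperIntegral_smul {c : ℝ} (hc : 0 ≤ c) (u : X → ℝ) :
    upperIntegral φ ψ (c • u) = c * upperIntegral φ ψ u := by
  simp only [upperIntegral, mul_sub, ← integral_const_mul, mul_max_of_nonneg _ _ hc, Pi.smul_apply,
    smul_eq_mul, mul_zero, mul_neg]

theorem integral_eq_integral_posPart_sub {u : X → ℝ} (hu : Integrable u μ) :
    ∫ x, u x ∂μ = (∫ x, max (u x) 0 ∂μ) - ∫ x, max (-u x) 0 ∂μ := by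
  simpa only [Real.coe_toNNReal'] using integral_eq_integral_pos_part_sub_integral_neg_part hu

theorem integral_le_upperIntegral (hφμ : φ ≤ μ) (hμψ : μ ≤ ψ) {u : X → ℝ} (hu : Integrable u ψ) :
    ∫ x, u x ∂μ ≤ upperIntegral φ ψ u := by
  have hμ := hu.mono_measure hμψ
  rw [integral_eq_integral_posPart_sub hμ]
  exact sub_le_sub
    (integral_mono_measure hμψ (ae_of_all _ fun x => le_max_right (u x) 0) hu.pos_part)
    (integral_mono_measure hφμ (ae_of_all _ fun x => le_max_right (-u x) 0) hμ.neg_part)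

theorem upperIntegral_eq_integral_add [IsFiniteMeasure φ] (hφψ : φ ≤ ψ) {u : X → ℝ}
    (hu : Integrable u ψ) :
    upperIntegral φ ψ u = (∫ x, u x ∂φ) + ∫ x, max (u x) 0 ∂(ψ - φ) := by
  have integral_split :
      ∫ x, max (u x) 0 ∂ψ = (∫ x, max (u x) 0 ∂(ψ - φ)) + ∫ x, max (u x) 0 ∂φ := by
    rw [← integral_add_measure (hu.mono_measure Measure.sub_le).pos_part
      (hu.mono_measure hφψ).pos_part, Measure.sub_add_cancel_of_le hφψ]
  rw [upperIntegral, integral_split, integral_eq_integral_posPart_sub (hu.mono_measure hφψ)]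
  ring

/-- Integration against a measure `μ ≤ ν`, as a linear functional on `L¹(ν)`: it is well defined
since `ν`-null sets are `μ`-null. -/
noncomputable def integralOfLE (hμν : μ ≤ ν) : (X →₁[ν] ℝ) →ₗ[ℝ] ℝ where
  toFun u := ∫ x, u x ∂μ
  map_add' u w := by
    rw [← integral_add ((L1.integrable_coeFn u).mono_measure hμν)
      ((L1.integrable_coeFn w).mono_measure hμν)]
    exact integral_congr_ae ((Lp.coeFn_add u w).filter_mono (ae_mono hμν))
  map_smul' c u := by
    rw [RingHom.id_apply, smul_eq_mul, ← integral_const_mul]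
    exact integral_congr_ae ((Lp.coeFn_smul c u).filter_mono (ae_mono hμν))

theorem integralOfLE_le (hμν : μ ≤ ν) (u : X →₁[ν] ℝ) :
    integralOfLE hμν u ≤ ∫ x, max (u x) 0 ∂ν := by
  simpa [upperIntegral, integralOfLE] using
    integral_le_upperIntegral (Measure.zero_le μ) hμν (L1.integrable_coeFn u)

theorem integralOfLE_congr (hμν : μ ≤ ν) {w : X →₁[ν] ℝ} {u : X → ℝ} (h : w =ᵐ[ν] u) :
    integralOfLE hμν w = ∫ x, u x ∂μ :=
  integral_congr_ae (h.filter_mono (ae_mono hμν))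

theorem integral_max_zero_congr {u w : X → ℝ} (h : u =ᵐ[ν] w) :
    ∫ x, max (u x) 0 ∂ν = ∫ x, max (w x) 0 ∂ν :=
  integral_congr_ae (h.fun_comp (max · 0))

theorem integral_max_zero_smul {p : ENNReal} {c : ℝ} (hc : 0 ≤ c) (u : Lp ℝ p ν) :
    ∫ x, max ((c • u) x) 0 ∂ν = c * ∫ x, max (u x) 0 ∂ν := by
  simp only [integral_max_zero_congr (Lp.coeFn_smul c u), ← integral_const_mul,
    mul_max_of_nonneg _ _ hc, Pi.smul_apply, smul_eq_mul, mul_zero]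

theorem integral_max_zero_add_le (u w : X →₁[ν] ℝ) :
    ∫ x, max ((u + w) x) 0 ∂ν ≤ (∫ x, max (u x) 0 ∂ν) + ∫ x, max (w x) 0 ∂ν := by
  have hu := L1.integrable_coeFn u
  have hw := L1.integrable_coeFn w
  rw [integral_max_zero_congr (Lp.coeFn_add u w), ← integral_add hu.pos_part hw.pos_part]
  exact integral_mono (hu.add hw).pos_part (hu.pos_part.add hw.pos_part) fun x =>
    max_le (add_le_add (le_max_left _ _) (le_max_left _ _))
      (add_nonneg (le_max_right _ _) (le_max_right _ _))

theorem integral_max_indicatorConstLp_zero {p : ENNReal} {s : Set X} (hs : MeasurableSet s)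
    (hνs : ν s ≠ ⊤) (c : ℝ) :
    ∫ x, max (indicatorConstLp p hs hνs c x) 0 ∂ν = ν.real s * max c 0 := by
  rw [integral_max_zero_congr indicatorConstLp_coeFn, ← smul_eq_mul,
    ← integral_indicator_const _ hs]
  refine integral_congr_ae (ae_of_all _ fun x => ?_)
  by_cases hx : x ∈ s <;> simp [hx]

theorem exists_measure_le_real_eq_indicatorConstLp [IsFiniteMeasure ν] {L : (X →₁[ν] ℝ) →ₗ[ℝ] ℝ}
    (hL : ∀ u, L u ≤ ∫ x, max (u x) 0 ∂ν) :
    ∃ μ ≤ ν, ∀ s (hs : MeasurableSet s) (hνs : ν s ≠ ⊤),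
      μ.real s = L (indicatorConstLp 1 hs hνs 1) := by
  classical
  have L_nonneg (s : Set X) (hs : MeasurableSet s) (hνs : ν s ≠ ⊤) :
      0 ≤ L (indicatorConstLp 1 hs hνs 1) := by
    have h := hL (indicatorConstLp 1 hs hνs (-1))
    rw [integral_max_indicatorConstLp_zero, indicatorConstLp_eq_smul_one, map_smul] at h
    simpa using h
  have L_le (s : Set X) (hs : MeasurableSet s) (hνs : ν s ≠ ⊤) :
      L (indicatorConstLp 1 hs hνs 1) ≤ ν.real s :=
    (hL _).trans_eq (by simp [integral_max_indicatorConstLp_zero])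
  obtain ⟨μ, hμν, hμ⟩ := exists_measure_le_of_additive (ν := ν)
    (fun s => if hs : MeasurableSet s then L (indicatorConstLp 1 hs (measure_ne_top ν s) 1) else 0)
    (fun s hs => by simpa only [hs, dif_pos] using L_nonneg s hs _)
    (fun s hs => by simpa only [hs, dif_pos] using L_le s hs _)
    (fun s t hs ht hst => by
      simp only [hs, ht, hs.union ht, dif_pos, ← map_add]
      exact congrArg L (indicatorConstLp_disjoint_union hs ht _ _ hst 1))
  exact ⟨μ, hμν, fun s hs _ => (hμ s hs).trans (dif_pos hs)⟩

theorem exists_measure_le_eq_integralOfLE [IsFiniteMeasure ν] (L : (X →₁[ν] ℝ) →ₗ[ℝ] ℝ)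
    (hL : ∀ u, L u ≤ ∫ x, max (u x) 0 ∂ν) :
    ∃ (μ : Measure X) (hμν : μ ≤ ν), L = integralOfLE hμν := by
  obtain ⟨μ, hμν, hμ⟩ := exists_measure_le_real_eq_indicatorConstLp hL
  let toCLM (K : (X →₁[ν] ℝ) →ₗ[ℝ] ℝ) (hK : ∀ u, K u ≤ ∫ x, max (u x) 0 ∂ν) :
      (X →₁[ν] ℝ) →L[ℝ] ℝ :=
    K.mkContinuous 1 fun u => (abs_le_norm_of_le_integral_max_zero hK u).trans_eq (one_mul _).symm
  have clm_eq : toCLM L hL = toCLM (integralOfLE hμν) (integralOfLE_le hμν) := by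
    refine continuousLinearMap_ext_indicatorConstLp ENNReal.one_ne_top fun s hs hνs => ?_
    calc L (indicatorConstLp 1 hs hνs 1) = μ.real s := (hμ s hs hνs).symm
      _ = ∫ x, s.indicator (fun _ => (1 : ℝ)) x ∂μ := by
        rw [integral_indicator_const _ hs, smul_eq_mul, mul_one]
      _ = integralOfLE hμν (indicatorConstLp 1 hs hνs 1) :=
        (integralOfLE_congr hμν indicatorConstLp_coeFn).symm
  exact ⟨μ, hμν, congrArg ContinuousLinearMap.toLinearMap clm_eq⟩

variable {W : Type*} [AddCommGroup W] [Module ℝ W]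

/-- The linear map into `L¹(ν)` induced by a linear family of `ν`-integrable functions. -/
noncomputable def toL1LinearMap (A : W →ₗ[ℝ] X → ℝ) (hA : ∀ w, Integrable (A w) ν) :
    W →ₗ[ℝ] X →₁[ν] ℝ where
  toFun w := (hA w).toL1 (A w)
  map_add' w w' := by simp only [map_add, Integrable.toL1_add _ _ (hA w) (hA w')]
  map_smul' r w := by simp only [map_smul, Integrable.toL1_smul' _ (hA w), RingHom.id_apply]

theorem coeFn_toL1LinearMap (A : W →ₗ[ℝ] X → ℝ) (hA : ∀ w, Integrable (A w) ν) (w : W) :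
    toL1LinearMap A hA w =ᵐ[ν] A w :=
  (hA w).coeFn_toL1

theorem exists_measure_between_integral_eq [IsFiniteMeasure ψ] (hφψ : φ ≤ ψ)
    (A : W →ₗ[ℝ] X → ℝ) (hA : ∀ w, Integrable (A w) ψ) (ℓ : W →ₗ[ℝ] ℝ)
    (hℓ : ∀ w, ℓ w ≤ upperIntegral φ ψ (A w)) :
    ∃ μ, φ ≤ μ ∧ μ ≤ ψ ∧ ∀ w, ∫ x, A w x ∂μ = ℓ w := by
  have : IsFiniteMeasure φ := isFiniteMeasure_of_le ψ hφψ
  have hAφ (w : W) : Integrable (A w) φ := (hA w).mono_measure hφψ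
  have hAν (w : W) : Integrable (A w) (ψ - φ) := (hA w).mono_measure Measure.sub_le
  let ι : W →ₗ[ℝ] ℝ := integralOfLE le_rfl ∘ₗ toL1LinearMap A hAφ
  have hι (w : W) : ι w = ∫ x, A w x ∂φ := integralOfLE_congr le_rfl (coeFn_toL1LinearMap A hAφ w)
  obtain ⟨L, hLA, hL⟩ := exists_dual_comp_eq_and_le_sublinear (toL1LinearMap A hAν) (ℓ - ι)
    (fun u => ∫ x, max (u x) 0 ∂(ψ - φ)) (fun c hc u => integral_max_zero_smul hc.le u)
    integral_max_zero_add_le fun w => by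
      rw [integral_max_zero_congr (coeFn_toL1LinearMap A hAν w), LinearMap.sub_apply, hι,
        sub_le_iff_le_add', ← upperIntegral_eq_integral_add hφψ (hA w)]
      exact hℓ w
  obtain ⟨μ, hμ, rfl⟩ := exists_measure_le_eq_integralOfLE L hL
  have hμφ : μ + φ ≤ ψ := (add_le_add_left hμ φ).trans_eq (Measure.sub_add_cancel_of_le hφψ)
  refine ⟨μ + φ, Measure.le_add_left le_rfl, hμφ, fun w => ?_⟩
  have hμA : ∫ x, A w x ∂μ = ℓ w - ι w :=
    (integralOfLE_congr hμ (coeFn_toL1LinearMap A hAν w)).symm.trans (LinearMap.congr_fun hLA w)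
  rw [integral_add_measure ((hAν w).mono_measure hμ) (hAφ w), hμA, hι, sub_add_cancel]

theorem smul_le_upperIntegral_add_smul {F : W →ₗ[ℝ] X → ℝ} {v : X → ℝ} {c : ℝ}
    (h_add : ∀ w, c ≤ upperIntegral φ ψ (F w + v)) (h_sub : ∀ w, -c ≤ upperIntegral φ ψ (F w - v))
    (h_zero : ∀ w, 0 ≤ upperIntegral φ ψ (F w)) (w : W) (t : ℝ) :
    t * c ≤ upperIntegral φ ψ (F w + t • v) := by
  rcases lt_trichotomy t 0 with ht | rfl | ht
  · have scaled : F w + t • v = (-t) • (F ((-t)⁻¹ • w) - v) := by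
      rw [smul_sub, map_smul, smul_inv_smul₀ (neg_ne_zero.2 ht.ne), neg_smul, sub_neg_eq_add]
    rw [scaled, upperIntegral_smul (neg_nonneg.2 ht.le), ← neg_mul_neg]
    exact mul_le_mul_of_nonneg_left (h_sub _) (neg_nonneg.2 ht.le)
  · simpa using h_zero w
  · have scaled : F w + t • v = t • (F (t⁻¹ • w) + v) := by
      rw [smul_add, map_smul, smul_inv_smul₀ ht.ne']
    rw [scaled, upperIntegral_smul ht.le]
    exact mul_le_mul_of_nonneg_left (h_add _) ht.le

theorem exists_measure_between_integral_eq_zero_and_eq [IsFiniteMeasure ψ]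
    (hφψ : φ ≤ ψ) (F : W →ₗ[ℝ] X → ℝ) (hF : ∀ w, Integrable (F w) ψ) {v : X → ℝ}
    (hv : Integrable v ψ) {c : ℝ} (h_add : ∀ w, c ≤ upperIntegral φ ψ (F w + v))
    (h_sub : ∀ w, -c ≤ upperIntegral φ ψ (F w - v)) (h_zero : ∀ w, 0 ≤ upperIntegral φ ψ (F w)) :
    ∃ μ, φ ≤ μ ∧ μ ≤ ψ ∧ (∀ w, ∫ x, F w x ∂μ = 0) ∧ ∫ x, v x ∂μ = c := by
  obtain ⟨μ, hφμ, hμψ, hμ⟩ := exists_measure_between_integral_eq hφψ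
    (F.coprod (LinearMap.toSpanSingleton ℝ _ v))
    (fun wt => (hF wt.1).add (hv.smul wt.2))
    (LinearMap.toSpanSingleton ℝ ℝ c ∘ₗ LinearMap.snd ℝ W ℝ)
    (fun wt => smul_le_upperIntegral_add_smul h_add h_sub h_zero wt.1 wt.2)
  exact ⟨μ, hφμ, hμψ, fun w => by simpa using hμ (w, 0), by simpa using hμ (0, 1)⟩

end MeasuresBetween

section Circulation

variable {J : Type*} [MeasurableSpace J]

/-- The linear map sending `f` to the potential `F(x, y) = f x - f y`, for arbitrary functions `f`:
the regularity of `f` is asked for where it is needed. -/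
def potential : (J → ℝ) →ₗ[ℝ] J × J → ℝ :=
  LinearMap.funLeft ℝ ℝ Prod.fst - LinearMap.funLeft ℝ ℝ Prod.snd

variable {μ φ ψ : Measure (J × J)}

theorem integrable_potential {f : J → ℝ} (hf₁ : Integrable f μ.fst) (hf₂ : Integrable f μ.snd) :
    Integrable (potential f) μ :=
  (hf₁.comp_measurable measurable_fst).sub (hf₂.comp_measurable measurable_snd)

theorem integral_potential {f : J → ℝ} (hf₁ : Integrable f μ.fst) (hf₂ : Integrable f μ.snd) :
    ∫ p, potential f p ∂μ = (∫ x, f x ∂μ.fst) - ∫ x, f x ∂μ.snd := by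
  rw [Measure.fst, Measure.snd,
    integral_map measurable_fst.aemeasurable hf₁.aestronglyMeasurable,
    integral_map measurable_snd.aemeasurable hf₂.aestronglyMeasurable]
  exact integral_sub (hf₁.comp_measurable measurable_fst) (hf₂.comp_measurable measurable_snd)

theorem fst_eq_snd_of_forall_integral_potential_eq_zero [IsFiniteMeasure μ]
    (h : ∀ g : SimpleFunc J ℝ, ∫ p, potential g p ∂μ = 0) : μ.fst = μ.snd := by
  refine Measure.ext fun s hs => (measureReal_eq_measureReal_iff ..).1 ?_
  have coe_indicator : ⇑((SimpleFunc.const J (1 : ℝ)).restrict s) = s.indicator 1 :=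
    SimpleFunc.coe_restrict _ hs
  have h_indicator := h ((SimpleFunc.const J 1).restrict s)
  rw [integral_potential (SimpleFunc.integrable_of_isFiniteMeasure _)
    (SimpleFunc.integrable_of_isFiniteMeasure _), coe_indicator, integral_indicator_one hs,
    integral_indicator_one hs] at h_indicator
  exact sub_eq_zero.1 h_indicator

theorem forall_toSignedMeasure_prod_univ_eq_iff_fst_eq_snd [IsFiniteMeasure μ] :
    (∀ A : Set J, MeasurableSet A →
      μ.toSignedMeasure (A ×ˢ univ) = μ.toSignedMeasure (univ ×ˢ A)) ↔ μ.fst = μ.snd := by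
  rw [Measure.ext_iff]
  refine forall₂_congr fun A hA => ?_
  rw [Measure.toSignedMeasure_apply_measurable (hA.prod .univ),
    Measure.toSignedMeasure_apply_measurable (MeasurableSet.univ.prod hA), prod_univ, univ_prod,
    Measure.fst_apply hA, Measure.snd_apply hA, measureReal_eq_measureReal_iff]

theorem exists_circulation_iff_exists_measure [IsFiniteMeasure φ] [IsFiniteMeasure ψ]
    (v : J × J → ℝ) (c : ℝ) :
    (∃ α : SignedMeasure (J × J),
        (∀ A : Set J, MeasurableSet A → α (A ×ˢ (univ : Set J)) = α ((univ : Set J) ×ˢ A)) ∧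
        φ.toSignedMeasure ≤ α ∧ α ≤ ψ.toSignedMeasure ∧ signedIntegral α v = c) ↔
      ∃ μ : Measure (J × J), φ ≤ μ ∧ μ ≤ ψ ∧ μ.fst = μ.snd ∧ ∫ p, v p ∂μ = c := by
  constructor
  · rintro ⟨α, hα, hφα, hαψ, rfl⟩
    obtain ⟨μ, _, rfl⟩ := exists_toSignedMeasure_eq_of_nonneg
      ((Measure.zero_le_toSignedMeasure φ).trans hφα)
    exact ⟨μ, (Measure.toSignedMeasure_le_toSignedMeasure_iff φ μ).1 hφα,
      (Measure.toSignedMeasure_le_toSignedMeasure_iff μ ψ).1 hαψ,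
      forall_toSignedMeasure_prod_univ_eq_iff_fst_eq_snd.1 hα,
      (signedIntegral_toSignedMeasure μ v).symm⟩
  · rintro ⟨μ, hφμ, hμψ, hμ, rfl⟩
    have : IsFiniteMeasure μ := isFiniteMeasure_of_le ψ hμψ
    exact ⟨μ.toSignedMeasure, forall_toSignedMeasure_prod_univ_eq_iff_fst_eq_snd.2 hμ,
      (Measure.toSignedMeasure_le_toSignedMeasure_iff φ μ).2 hφμ,
      (Measure.toSignedMeasure_le_toSignedMeasure_iff μ ψ).2 hμψ,
      signedIntegral_toSignedMeasure μ v⟩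

theorem exists_measure_between_fst_eq_snd_iff [IsFiniteMeasure ψ] (hφψ : φ ≤ ψ)
    {v : J × J → ℝ} (hv : Integrable v ψ) (c : ℝ) :
    (∃ μ : Measure (J × J), φ ≤ μ ∧ μ ≤ ψ ∧ μ.fst = μ.snd ∧ ∫ p, v p ∂μ = c) ↔
      ∀ f : J → ℝ, Measurable f → (∃ C, ∀ x, |f x| ≤ C) →
        c ≤ upperIntegral φ ψ (potential f + v) ∧ -c ≤ upperIntegral φ ψ (potential f - v) ∧
          0 ≤ upperIntegral φ ψ (potential f) := by
  constructor
  · rintro ⟨μ, hφμ, hμψ, hμ, rfl⟩ f hf ⟨C, hC⟩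
    have : IsFiniteMeasure μ := isFiniteMeasure_of_le ψ hμψ
    have hf_int (ρ : Measure J) [IsFiniteMeasure ρ] : Integrable f ρ :=
      .of_bound hf.aestronglyMeasurable C (ae_of_all _ hC)
    have hfψ : Integrable (potential f) ψ := integrable_potential (hf_int _) (hf_int _)
    have hfμ := hfψ.mono_measure hμψ
    have hvμ := hv.mono_measure hμψ
    have potential_zero : ∫ p, potential f p ∂μ = 0 := by
      rw [integral_potential (hf_int _) (hf_int _), hμ, sub_self]
    refine ⟨?_, ?_, ?_⟩
    · simpa only [Pi.add_apply, integral_add hfμ hvμ, potential_zero, zero_add] using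
        integral_le_upperIntegral hφμ hμψ (hfψ.add hv)
    · simpa only [Pi.sub_apply, integral_sub hfμ hvμ, potential_zero, zero_sub] using
        integral_le_upperIntegral hφμ hμψ (hfψ.sub hv)
    · simpa only [potential_zero] using integral_le_upperIntegral hφμ hμψ hfψ
  · intro h
    let F : SimpleFunc J ℝ →ₗ[ℝ] J × J → ℝ :=
      potential ∘ₗ
        { toFun := (⇑), map_add' := SimpleFunc.coe_add, map_smul' := SimpleFunc.coe_smul }
    have hF (g : SimpleFunc J ℝ) := h g g.measurable g.exists_forall_norm_le
    obtain ⟨μ, hφμ, hμψ, hμF, hμv⟩ := exists_measure_between_integral_eq_zero_and_eq hφψ F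
      (fun g => integrable_potential g.integrable_of_isFiniteMeasure
        g.integrable_of_isFiniteMeasure)
      hv (fun g => (hF g).1) (fun g => (hF g).2.1) (fun g => (hF g).2.2)
    have : IsFiniteMeasure μ := isFiniteMeasure_of_le ψ hμψ
    exact ⟨μ, hφμ, hμψ, fst_eq_snd_of_forall_integral_potential_eq_zero hμF, hμv⟩

end Circulation

theorem stmt_1_general {J : Type*} [MeasurableSpace J] (v : J × J → ℝ) (c : ℝ)
    (φ ψ : Measure (J × J)) [IsFiniteMeasure φ] [IsFiniteMeasure ψ] (hφψ : φ ≤ ψ)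
    (hv : Integrable v ψ) :
    (∃ α : SignedMeasure (J × J),
        (∀ A : Set J, MeasurableSet A → α (A ×ˢ (univ : Set J)) = α ((univ : Set J) ×ˢ A)) ∧
        φ.toSignedMeasure ≤ α ∧ α ≤ ψ.toSignedMeasure ∧
        signedIntegral α v = c) ↔
      (∀ f : J → ℝ, Measurable f → (∃ C, ∀ x, |f x| ≤ C) →
        ((∫ p, max ((f p.1 - f p.2) + v p) 0 ∂ψ) ≥
            (∫ p, max (-((f p.1 - f p.2) + v p)) 0 ∂φ) + c) ∧
        ((∫ p, max ((f p.1 - f p.2) - v p) 0 ∂ψ) ≥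
            (∫ p, max (-((f p.1 - f p.2) - v p)) 0 ∂φ) - c) ∧
        ((∫ p, max (f p.1 - f p.2) 0 ∂ψ) ≥ ∫ p, max (-(f p.1 - f p.2)) 0 ∂φ)) := by
  rw [exists_circulation_iff_exists_measure, exists_measure_between_fst_eq_snd_iff hφψ hv]
  refine forall₃_congr fun f _ _ => ?_
  refine and_congr le_sub_iff_add_le' (and_congr ?_ sub_nonneg)
  rw [ge_iff_le, sub_eq_add_neg (∫ p, max (-((f p.1 - f p.2) - v p)) 0 ∂φ) c]
  exact le_sub_iff_add_le'

/-- **Optimal circulations.** Given a bounded nonnegative measurable `v`, a real `c`, and finite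
nonnegative measures `φ ≤ ψ` on `J × J`, there is a circulation `α` with `φ ≤ α ≤ ψ` and
`∫ v dα = c` iff the three inequalities hold for every potential `F(x,y) = f(x) - f(y)`. -/
theorem stmt_1 {J : Type*} [MeasurableSpace J] [StandardBorelSpace J]
    (v : J × J → ℝ) (hv_meas : Measurable v) (hv_bdd : ∃ C, ∀ p, |v p| ≤ C)
    (hv_nonneg : ∀ p, 0 ≤ v p) (c : ℝ)
    (φ ψ : Measure (J × J)) [IsFiniteMeasure φ] [IsFiniteMeasure ψ]
    (hφψ : φ ≤ ψ) :
    (∃ α : SignedMeasure (J × J),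
        (∀ A : Set J, MeasurableSet A → α (A ×ˢ (univ : Set J)) = α ((univ : Set J) ×ˢ A)) ∧
        φ.toSignedMeasure ≤ α ∧ α ≤ ψ.toSignedMeasure ∧
        signedIntegral α v = c) ↔
      (∀ f : J → ℝ, Measurable f → (∃ C, ∀ x, |f x| ≤ C) →
        ((∫ p, max ((f p.1 - f p.2) + v p) 0 ∂ψ) ≥
            (∫ p, max (-((f p.1 - f p.2) + v p)) 0 ∂φ) + c) ∧
        ((∫ p, max ((f p.1 - f p.2) - v p) 0 ∂ψ) ≥
            (∫ p, max (-((f p.1 - f p.2) - v p)) 0 ∂φ) - c) ∧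
        ((∫ p, max (f p.1 - f p.2) 0 ∂ψ) ≥ ∫ p, max (-(f p.1 - f p.2)) 0 ∂φ)) :=
  hv_bdd.elim fun C hC => stmt_1_general v c φ ψ hφψ
    (.of_bound hv_meas.aestronglyMeasurable C (ae_of_all _ hC))
end

section
/- Let (J, 𝒜) be a standard Borel space, let α, β be Borel probability measures on J, and let E ⊆ J × J be a Borel set such that (J × J) \ E is a countable union of product sets A × B with A, B Borel subsets of J. Then there exists an α-β transshipment μ concentrated on E (i.e. μ((J × J) \ E) = 0) if and only if α(S) + β(T) ≤ 1 for any two Borel sets S, T ⊆ J with (S × T) ∩ E = ∅. -/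
open MeasureTheory Set

/-!
For a closed set `E` in a product of compact metrizable spaces, a layer-cake computation turns
`α S + β T ≤ α univ` into the nonnegativity of `∫ f ∂α + ∫ g ∂β` for all continuous `f`, `g` with
`f x + g y ≥ 0` on `E`. The Riesz extension theorem extends this functional from the functions
`f x + g y` to a positive functional on all of `C(E, ℝ)`, and the measure representing it has the
prescribed marginals. In general, each factor embeds measurably into a Cantor space so that the
sets `A i` and `B i` become traces of open sets. This makes `E` the trace of a closed set, and a
measure whose marginals live on the ranges of the embeddings can be pulled back.
-/

section PositiveFunctional

lemma exists_nonneg_linearMap_comp_eq {V W : Type*} [AddCommGroup V] [Module ℝ V]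
    [AddCommGroup W] [Module ℝ W] (s : PointedCone ℝ W) (T : V →ₗ[ℝ] W) (L : V →ₗ[ℝ] ℝ)
    (nonneg : ∀ v, T v ∈ s → 0 ≤ L v) (dense : ∀ w, ∃ v, T v + w ∈ s) :
    ∃ G : W →ₗ[ℝ] ℝ, G ∘ₗ T = L ∧ ∀ w ∈ s, 0 ≤ G w := by
  have ker_le : ∀ v ∈ T.ker, L v = 0 := by
    intro v hv
    have hTv : T v = 0 := hv
    have h_neg : 0 ≤ L (-v) := nonneg _ (by simp [hTv])
    have h_pos : 0 ≤ L v := nonneg _ (by simp [hTv])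
    rw [map_neg] at h_neg
    linarith
  obtain ⟨F, rfl⟩ : L ∈ T.dualMap.range := by
    rw [LinearMap.range_dualMap_eq_dualAnnihilator_ker, Submodule.mem_dualAnnihilator]
    exact ker_le
  obtain ⟨G, hGF, hG⟩ := riesz_extension s (F.toPMap T.range)
    (by rintro ⟨_, v, rfl⟩ hv; exact nonneg v hv)
    (fun w ↦ (dense w).imp' (fun v ↦ ⟨T v, v, rfl⟩) fun _ hv ↦ hv)
  exact ⟨G, LinearMap.ext fun v ↦ hGF ⟨T v, v, rfl⟩, hG⟩

variable {X : Type*} [TopologicalSpace X] [CompactSpace X] [MeasurableSpace X]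

lemma integrable_continuousMap [OpensMeasurableSpace X] (μ : Measure X) [IsFiniteMeasure μ]
    (f : C(X, ℝ)) : Integrable f μ :=
  f.continuous.integrable_of_hasCompactSupport (.of_compactSpace f)

/-- Integration against a finite measure, as a linear functional on the continuous functions. -/
noncomputable def integralLinearMap [OpensMeasurableSpace X] (μ : Measure X) [IsFiniteMeasure μ] :
    C(X, ℝ) →ₗ[ℝ] ℝ where
  toFun f := ∫ x, f x ∂μ
  map_add' f g := integral_add (integrable_continuousMap μ f) (integrable_continuousMap μ g)
  map_smul' c f := integral_const_mul c f

lemma exists_isFiniteMeasure_forall_integral_eq [T2Space X] [BorelSpace X]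
    (G : C(X, ℝ) →ₗ[ℝ] ℝ) (hG : ∀ u, 0 ≤ u → 0 ≤ G u) :
    ∃ ν : Measure X, IsFiniteMeasure ν ∧ ∀ u : C(X, ℝ), ∫ x, u x ∂ν = G u := by
  let Λ : CompactlySupportedContinuousMap X ℝ →ₚ[ℝ] ℝ := PositiveLinearMap.mk₀
    { toFun := fun u ↦ G u.toContinuousMap
      map_add' := fun u v ↦ G.map_add u.toContinuousMap v.toContinuousMap
      map_smul' := fun c u ↦ G.map_smul c u.toContinuousMap }
    (fun u hu ↦ hG u.toContinuousMap hu)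
  exact ⟨RealRMK.rieszMeasure Λ, inferInstance, fun u ↦ RealRMK.integral_rieszMeasure Λ
    (CompactlySupportedContinuousMap.continuousMapEquiv u)⟩

end PositiveFunctional

section Marginals

variable {X Y : Type*} [MeasurableSpace X] [MeasurableSpace Y]

lemma lintegral_ofReal_eq_lintegral_measure_lt (μ : Measure X) {f : X → ℝ} (hf : AEMeasurable f μ) :
    ∫⁻ x, ENNReal.ofReal (f x) ∂μ = ∫⁻ t in Ioi 0, μ {x | t < f x} := by
  calc ∫⁻ x, ENNReal.ofReal (f x) ∂μ = ∫⁻ x, ENNReal.ofReal (max (f x) 0) ∂μ := by simp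
    _ = ∫⁻ t in Ioi 0, μ {x | t < max (f x) 0} :=
      lintegral_eq_lintegral_meas_lt μ (.of_forall fun _ ↦ le_max_right _ _)
        (hf.max aemeasurable_const)
    _ = ∫⁻ t in Ioi 0, μ {x | t < f x} :=
      setLIntegral_congr_fun measurableSet_Ioi fun t (ht : 0 < t) ↦ by simp [ht.not_gt]

lemma map_eq_of_forall_integral_comp_eq [TopologicalSpace X] [HasOuterApproxClosed X] [BorelSpace X]
    {α : Measure X} [IsFiniteMeasure α] {ν : Measure Y} [IsFiniteMeasure ν] {π : Y → X}
    (hπ : AEMeasurable π ν)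
    (h : ∀ f : BoundedContinuousFunction X ℝ, ∫ y, f (π y) ∂ν = ∫ x, f x ∂α) :
    ν.map π = α := by
  refine ext_of_forall_integral_eq_of_IsFiniteMeasure fun f ↦ ?_
  rw [integral_map hπ f.continuous.aestronglyMeasurable, h]

variable {X' Y' : Type*} [MeasurableSpace X'] [MeasurableSpace Y'] {φ : X → X'} {ψ : Y → Y'}
  {μ : Measure (X' × Y')}

lemma fst_comap_prodMap (hφ : MeasurableEmbedding φ) (hψ : MeasurableEmbedding ψ)
    (hμ : μ.snd (range ψ)ᶜ = 0) : (μ.comap (Prod.map φ ψ)).fst = μ.fst.comap φ := by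
  ext S hS
  have image_fst : Prod.map φ ψ '' (Prod.fst ⁻¹' S) =
      Prod.fst ⁻¹' (φ '' S) ∩ Prod.snd ⁻¹' range ψ := by
    rw [← prod_univ, prodMap_image_prod, image_univ, prod_eq]
  rw [Measure.snd_apply hψ.measurableSet_range.compl, preimage_compl] at hμ
  rw [Measure.fst_apply hS, (hφ.prodMap hψ).comap_apply, image_fst, measure_inter_conull hμ,
    hφ.comap_apply, Measure.fst_apply (hφ.measurableSet_image.2 hS)]

lemma snd_comap_prodMap (hφ : MeasurableEmbedding φ) (hψ : MeasurableEmbedding ψ)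
    (hμ : μ.fst (range φ)ᶜ = 0) : (μ.comap (Prod.map φ ψ)).snd = μ.snd.comap ψ := by
  ext T hT
  have image_snd : Prod.map φ ψ '' (Prod.snd ⁻¹' T) =
      Prod.snd ⁻¹' (ψ '' T) ∩ Prod.fst ⁻¹' range φ := by
    rw [← univ_prod, prodMap_image_prod, image_univ, prod_eq, inter_comm]
  rw [Measure.fst_apply hφ.measurableSet_range.compl, preimage_compl] at hμ
  rw [Measure.snd_apply hT, (hφ.prodMap hψ).comap_apply, image_snd, measure_inter_conull hμ,
    hψ.comap_apply, Measure.snd_apply (hψ.measurableSet_image.2 hT)]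

lemma exists_measurableEmbedding_forall_preimage_isOpen [StandardBorelSpace X] {ι : Type*}
    [Countable ι] (A : ι → Set X) (hA : ∀ i, MeasurableSet (A i)) :
    ∃ φ : X → (ℕ → Bool) × (ι → Bool),
      MeasurableEmbedding φ ∧ ∀ i, ∃ U, IsOpen U ∧ φ ⁻¹' U = A i := by
  classical
  obtain ⟨e, he, he_inj⟩ :=
    MeasurableSpace.measurable_injection_nat_bool_of_countablySeparated X
  have h_ind : Measurable fun x i ↦ decide (x ∈ A i) :=
    measurable_pi_lambda _ fun i ↦ measurable_to_bool (by simpa [preimage] using hA i)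
  refine ⟨fun x ↦ (e x, fun i ↦ decide (x ∈ A i)),
    (he.prodMk h_ind).measurableEmbedding fun x y hxy ↦ he_inj (congrArg Prod.fst hxy),
    fun i ↦ ⟨{z | z.2 i = true}, ?_, by ext; simp⟩⟩
  exact (isOpen_discrete {true}).preimage (by fun_prop : Continuous fun z : _ × (ι → Bool) ↦ z.2 i)

end Marginals

section Strassen

variable {X Y : Type*} [MeasurableSpace X] [MeasurableSpace Y]

/-- `μ` is an `α`-`β` transshipment concentrated on `E`. -/
structure IsTransshipmentOn (α : Measure X) (β : Measure Y) (E : Set (X × Y))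
    (μ : Measure (X × Y)) : Prop where
  fst_eq : μ.fst = α
  snd_eq : μ.snd = β
  measure_compl : μ Eᶜ = 0

/-- Strassen's condition for the existence of an `α`-`β` transshipment concentrated on `E`. It is
meant for `α` and `β` of equal total mass; `α univ` stands for this common mass. -/
def StrassenCondition (α : Measure X) (β : Measure Y) (E : Set (X × Y)) : Prop :=
  ∀ S T, MeasurableSet S → MeasurableSet T → Disjoint (S ×ˢ T) E → α S + β T ≤ α univ

variable {α : Measure X} {β : Measure Y} {E : Set (X × Y)}

lemma isTransshipmentOn_iff {μ : Measure (X × Y)} :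
    IsTransshipmentOn α β E μ ↔ μ.fst = α ∧ μ.snd = β ∧ μ Eᶜ = 0 :=
  ⟨fun h ↦ ⟨h.fst_eq, h.snd_eq, h.measure_compl⟩, fun ⟨h₁, h₂, h₀⟩ ↦ ⟨h₁, h₂, h₀⟩⟩

lemma IsTransshipmentOn.strassenCondition {μ : Measure (X × Y)} (hμ : IsTransshipmentOn α β E μ) :
    StrassenCondition α β E := by
  intro S T hS hT hST
  have h_inter : μ (Prod.fst ⁻¹' S ∩ Prod.snd ⁻¹' T) = 0 :=
    measure_mono_null hST.subset_compl_right hμ.measure_compl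
  calc α S + β T = μ (Prod.fst ⁻¹' S) + μ (Prod.snd ⁻¹' T) := by
        rw [← hμ.fst_eq, ← hμ.snd_eq, Measure.fst_apply hS, Measure.snd_apply hT]
    _ = μ (Prod.fst ⁻¹' S ∪ Prod.snd ⁻¹' T) := by
        rw [← measure_union_add_inter _ (measurable_snd hT), h_inter, add_zero]
    _ ≤ μ univ := measure_mono (subset_univ _)
    _ = α univ := by rw [← hμ.fst_eq, Measure.fst_univ]

lemma IsTransshipmentOn.comap {X' Y' : Type*} [MeasurableSpace X'] [MeasurableSpace Y']
    {φ : X → X'} {ψ : Y → Y'} {F : Set (X' × Y')} {μ : Measure (X' × Y')}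
    (hμ : IsTransshipmentOn (α.map φ) (β.map ψ) F μ)
    (hφ : MeasurableEmbedding φ) (hψ : MeasurableEmbedding ψ) :
    IsTransshipmentOn α β (Prod.map φ ψ ⁻¹' F) (μ.comap (Prod.map φ ψ)) where
  fst_eq := by
    rw [fst_comap_prodMap hφ hψ (hμ.snd_eq ▸ ae_map_mem_range ψ hψ.measurableSet_range β),
      hμ.fst_eq, hφ.comap_map]
  snd_eq := by
    rw [snd_comap_prodMap hφ hψ (hμ.fst_eq ▸ ae_map_mem_range φ hφ.measurableSet_range α),
      hμ.snd_eq, hψ.comap_map]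
  measure_compl := by
    rw [(hφ.prodMap hψ).comap_apply, ← preimage_compl]
    exact measure_mono_null (image_preimage_subset _ _) hμ.measure_compl

namespace StrassenCondition

lemma map {X' Y' : Type*} [MeasurableSpace X'] [MeasurableSpace Y']
    {φ : X → X'} {ψ : Y → Y'} {F : Set (X' × Y')}
    (h : StrassenCondition α β (Prod.map φ ψ ⁻¹' F)) (hφ : Measurable φ) (hψ : Measurable ψ) :
    StrassenCondition (α.map φ) (β.map ψ) F := by
  intro S T hS hT hST
  rw [Measure.map_apply hφ hS, Measure.map_apply hψ hT, Measure.map_apply hφ .univ, preimage_univ]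
  exact h _ _ (hφ hS) (hψ hT) (hST.preimage (Prod.map φ ψ))

lemma swap (h : StrassenCondition α β E) (hαβ : α univ = β univ) :
    StrassenCondition β α (Prod.swap ⁻¹' E) := by
  intro T S hT hS hTS
  rw [add_comm, ← hαβ]
  refine h S T hS hT ?_
  rw [← preimage_swap_prod]
  exact hTS.preimage Prod.swap

variable [IsFiniteMeasure α]

/-- The neighbourhood form of Strassen's condition, as in Hall's marriage theorem. -/
lemma measure_le (h : StrassenCondition α β E) {S : Set X} {T : Set Y} (hS : MeasurableSet S)
    (hT : MeasurableSet T) (hST : ∀ p ∈ E, p.2 ∈ T → p.1 ∈ S) : β T ≤ α S := by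
  have h_disj : Disjoint (Sᶜ ×ˢ T) E :=
    disjoint_left.2 fun p hp hpE ↦ hp.1 (hST p hpE hp.2)
  have h_add : α Sᶜ + β T ≤ α Sᶜ + α S :=
    (h Sᶜ T hS.compl hT h_disj).trans_eq (by rw [add_comm, measure_add_measure_compl hS])
  exact (ENNReal.add_le_add_iff_left (measure_ne_top α _)).1 h_add

lemma lintegral_ofReal_le (h : StrassenCondition α β E) {f : X → ℝ} {g : Y → ℝ}
    (hf : Measurable f) (hg : Measurable g) (hgf : ∀ p ∈ E, g p.2 ≤ f p.1) :
    ∫⁻ y, ENNReal.ofReal (g y) ∂β ≤ ∫⁻ x, ENNReal.ofReal (f x) ∂α := by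
  rw [lintegral_ofReal_eq_lintegral_measure_lt β hg.aemeasurable,
    lintegral_ofReal_eq_lintegral_measure_lt α hf.aemeasurable]
  exact lintegral_mono fun t ↦ h.measure_le (hf measurableSet_Ioi) (hg measurableSet_Ioi)
    fun p hp (ht : t < g p.2) ↦ ht.trans_le (hgf p hp)

variable [IsFiniteMeasure β]

lemma integral_le (h : StrassenCondition α β E) (hαβ : α univ = β univ) {f : X → ℝ} {g : Y → ℝ}
    (hf : Measurable f) (hg : Measurable g) (hfi : Integrable f α) (hgi : Integrable g β)
    (hgf : ∀ p ∈ E, g p.2 ≤ f p.1) : ∫ y, g y ∂β ≤ ∫ x, f x ∂α := by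
  have h_pos := h.lintegral_ofReal_le hf hg hgf
  have h_neg : ∫⁻ x, ENNReal.ofReal (-f x) ∂α ≤ ∫⁻ y, ENNReal.ofReal (-g y) ∂β :=
    (h.swap hαβ).lintegral_ofReal_le hg.neg hf.neg fun p hp ↦ neg_le_neg (hgf p.swap hp)
  rw [integral_eq_lintegral_pos_part_sub_lintegral_neg_part hgi,
    integral_eq_lintegral_pos_part_sub_lintegral_neg_part hfi]
  exact sub_le_sub (ENNReal.toReal_mono hfi.lintegral_lt_top.ne h_pos)
    (ENNReal.toReal_mono hgi.neg.lintegral_lt_top.ne h_neg)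

end StrassenCondition

section Compact

variable [TopologicalSpace X] [CompactSpace X] [T2Space X] [BorelSpace X] [TopologicalSpace Y]
  [CompactSpace Y] [T2Space Y] [BorelSpace Y] [SecondCountableTopologyEither X Y]
  [IsFiniteMeasure α] [IsFiniteMeasure β]

/-- The restriction to `E` of the function `f x + g y`, linear in the pair `(f, g)`. -/
def sumRestrict (E : Set (X × Y)) : C(X, ℝ) × C(Y, ℝ) →ₗ[ℝ] C(E, ℝ) :=
  (ContinuousMap.compRightAlgHom ℝ ℝ ⟨fun p : E ↦ p.1.1, by fun_prop⟩).toLinearMap.coprod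
    (ContinuousMap.compRightAlgHom ℝ ℝ ⟨fun p : E ↦ p.1.2, by fun_prop⟩).toLinearMap

lemma StrassenCondition.exists_measure_subtype (h : StrassenCondition α β E)
    (hαβ : α univ = β univ) (hE : IsClosed E) :
    ∃ ν : Measure E, IsFiniteMeasure ν ∧ ∀ (f : C(X, ℝ)) (g : C(Y, ℝ)),
      ∫ p, (f p.1.1 + g p.1.2) ∂ν = ∫ x, f x ∂α + ∫ y, g y ∂β := by
  have : CompactSpace E := isCompact_iff_compactSpace.1 hE.isCompact
  let L := (integralLinearMap α).coprod (integralLinearMap β)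
  have nonneg (v) (hv : 0 ≤ sumRestrict E v) : 0 ≤ L v := by
    have h_le := h.integral_le hαβ v.1.continuous.measurable v.2.continuous.measurable.neg
      (integrable_continuousMap α v.1) (integrable_continuousMap β v.2).neg
      fun p hp ↦ neg_le_iff_add_nonneg.2 (hv ⟨p, hp⟩)
    simp only [Pi.neg_apply, integral_neg] at h_le
    exact neg_le_iff_add_nonneg.1 h_le
  have dense (u : C(E, ℝ)) : ∃ v, 0 ≤ sumRestrict E v + u := by
    refine ⟨(.const X ‖u‖, 0), fun p ↦ ?_⟩
    simpa [sumRestrict] using neg_le_iff_add_nonneg'.1 (u.neg_norm_le_apply p)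
  obtain ⟨G, hGL, hG⟩ := exists_nonneg_linearMap_comp_eq (PointedCone.positive ℝ C(E, ℝ))
    (sumRestrict E) L nonneg dense
  obtain ⟨ν, hν_fin, hν⟩ := exists_isFiniteMeasure_forall_integral_eq G hG
  exact ⟨ν, hν_fin, fun f g ↦ (hν (sumRestrict E (f, g))).trans (LinearMap.congr_fun hGL (f, g))⟩

theorem StrassenCondition.exists_isTransshipmentOn_of_isClosed [HasOuterApproxClosed X]
    [HasOuterApproxClosed Y] (h : StrassenCondition α β E) (hαβ : α univ = β univ)
    (hE : IsClosed E) : ∃ μ, IsTransshipmentOn α β E μ := by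
  obtain ⟨ν, _, hν⟩ := h.exists_measure_subtype hαβ hE
  have h_val : Measurable ((↑) : E → X × Y) := measurable_subtype_coe
  refine ⟨ν.map (↑), ?_, ?_, ?_⟩
  · rw [Measure.fst, Measure.map_map measurable_fst h_val]
    exact map_eq_of_forall_integral_comp_eq (by fun_prop) fun f ↦ by
      simpa using hν f.toContinuousMap 0
  · rw [Measure.snd, Measure.map_map measurable_snd h_val]
    exact map_eq_of_forall_integral_comp_eq (by fun_prop) fun g ↦ by
      simpa using hν 0 g.toContinuousMap
  · rw [Measure.map_apply h_val hE.measurableSet.compl, preimage_compl, Subtype.coe_preimage_self,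
      compl_univ, measure_empty]

end Compact

theorem stmt_10_general [StandardBorelSpace X] [StandardBorelSpace Y] [IsFiniteMeasure α]
    [IsFiniteMeasure β] (hαβ : α univ = β univ) {ι : Type*} [Countable ι] {A : ι → Set X}
    {B : ι → Set Y} (hA : ∀ i, MeasurableSet (A i)) (hB : ∀ i, MeasurableSet (B i))
    (hE : Eᶜ = ⋃ i, A i ×ˢ B i) :
    (∃ μ, IsTransshipmentOn α β E μ) ↔ StrassenCondition α β E := by
  refine ⟨fun ⟨μ, hμ⟩ ↦ hμ.strassenCondition, fun h ↦ ?_⟩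
  obtain ⟨φ, hφ, hφA⟩ := exists_measurableEmbedding_forall_preimage_isOpen A hA
  obtain ⟨ψ, hψ, hψB⟩ := exists_measurableEmbedding_forall_preimage_isOpen B hB
  choose U hU hUA using hφA
  choose V hV hVB using hψB
  let F := (⋃ i, U i ×ˢ V i)ᶜ
  have hF : IsClosed F := (isOpen_iUnion fun i ↦ (hU i).prod (hV i)).isClosed_compl
  obtain rfl : Prod.map φ ψ ⁻¹' F = E := by
    rw [← compl_inj_iff, hE, ← preimage_compl, compl_compl, preimage_iUnion]
    simp only [preimage_prod_map_prod, hUA, hVB]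
  have h_mass : α.map φ univ = β.map ψ univ := by
    simpa [Measure.map_apply hφ.measurable, Measure.map_apply hψ.measurable] using hαβ
  obtain ⟨μ, hμ⟩ := (h.map hφ.measurable hψ.measurable).exists_isTransshipmentOn_of_isClosed
    h_mass hF
  exact ⟨_, hμ.comap hφ hψ⟩

end Strassen

/-- **Strassen-type theorem.** Let `α, β` be Borel probability measures on a standard Borel
space `J`, and let `E ⊆ J × J` be a Borel set whose complement is a countable union of
measurable product sets. There is an `α`-`β` transshipment `μ` concentrated on `E` iff
`α(S) + β(T) ≤ 1` for any Borel sets `S, T` with `(S × T) ∩ E = ∅`. -/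
theorem stmt_10 {J : Type*} [MeasurableSpace J] [StandardBorelSpace J]
    (α β : Measure J) [IsProbabilityMeasure α] [IsProbabilityMeasure β]
    (E : Set (J × J)) (hE : MeasurableSet E)
    (A B : ℕ → Set J) (hA : ∀ n, MeasurableSet (A n)) (hB : ∀ n, MeasurableSet (B n))
    (hEc : Eᶜ = ⋃ n, A n ×ˢ B n) :
    (∃ μ : Measure (J × J), μ.fst = α ∧ μ.snd = β ∧ μ Eᶜ = 0) ↔
      (∀ S T : Set J, MeasurableSet S → MeasurableSet T →
        (S ×ˢ T) ∩ E = ∅ → α S + β T ≤ 1) := by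
  have hαβ : α univ = β univ := by simp only [measure_univ]
  simpa only [StrassenCondition, disjoint_iff_inter_eq_empty, measure_univ, isTransshipmentOn_iff]
    using stmt_10_general hαβ hA hB hEc
end

section
/- Let (J, 𝒜) be a standard Borel space and let λ₁, λ₂ be Borel probability measures on J. Let μ_n (n = 1, 2, …) be Borel measures on J × J coupling λ₁ and λ₂, i.e. with marginals μ_n¹ = λ₁ and μ_n² = λ₂. Then there is a strictly increasing sequence of indices n₁ < n₂ < ⋯ and a measure μ on J × J coupling λ₁ and λ₂ such that μ_{n_i}(A × B) → μ(A × B) as i → ∞, for all Borel sets A, B ⊆ J. -/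
open MeasureTheory Set

/-! On a Polish space a single finite measure is tight, so the couplings of two fixed measures are
uniformly tight; they form a closed set for weak convergence, hence by Prokhorov a compact one, and
a subsequence converges weakly to a coupling. Weak convergence controls closed rectangles from
above. Since the marginals are fixed, replacing `A` and `B` by closed subsets changes the mass of
`A × B` by an amount that is small uniformly over all couplings, so the upper bound extends to all
measurable rectangles. The lower bound for `A × B` is the upper bound for `A × Bᶜ`, because the two
masses add up to the fixed mass of `A`. -/

section Couplings

open Filter
open scoped ENNReal Topology

variable {X Y ι : Type*} [MeasurableSpace X] [MeasurableSpace Y]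
  {μ : Measure X} {ν : Measure Y} {π : Measure (X × Y)}

/-- A measure on a product space is a coupling of `μ` and `ν` if these are its first and second
marginals. No normalization is imposed, so that couplings can be rescaled. -/
structure IsCoupling (π : Measure (X × Y)) (μ : Measure X) (ν : Measure Y) : Prop where
  fst_eq : π.fst = μ
  snd_eq : π.snd = ν

namespace IsCoupling

lemma measure_univ_eq (h : IsCoupling π μ ν) : π univ = μ univ := by
  rw [← h.fst_eq, Measure.fst_univ]

lemma isProbabilityMeasure [IsProbabilityMeasure μ] (h : IsCoupling π μ ν) :
    IsProbabilityMeasure π :=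
  ⟨h.measure_univ_eq.trans measure_univ⟩

lemma isFiniteMeasure_left [IsFiniteMeasure π] (h : IsCoupling π μ ν) : IsFiniteMeasure μ :=
  h.fst_eq ▸ inferInstance

lemma isFiniteMeasure_right [IsFiniteMeasure π] (h : IsCoupling π μ ν) : IsFiniteMeasure ν :=
  h.snd_eq ▸ inferInstance

lemma eq_zero (h : IsCoupling π 0 ν) : π = 0 :=
  Measure.measure_univ_eq_zero.mp h.measure_univ_eq

lemma smul (c : ℝ≥0∞) (h : IsCoupling π μ ν) : IsCoupling (c • π) (c • μ) (c • ν) where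
  fst_eq := by rw [Measure.fst, Measure.map_smul, ← Measure.fst, h.fst_eq]
  snd_eq := by rw [Measure.snd, Measure.map_smul, ← Measure.snd, h.snd_eq]

lemma measure_prod_le_add_sdiff (h : IsCoupling π μ ν) (A A' : Set X) (B B' : Set Y) :
    π (A ×ˢ B) ≤ π (A' ×ˢ B') + (μ (A \ A') + ν (B \ B')) := by
  have hfst : π (Prod.fst ⁻¹' (A \ A')) ≤ μ (A \ A') :=
    h.fst_eq ▸ Measure.le_map_apply measurable_fst.aemeasurable _
  have hsnd : π (Prod.snd ⁻¹' (B \ B')) ≤ ν (B \ B') :=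
    h.snd_eq ▸ Measure.le_map_apply measurable_snd.aemeasurable _
  have hcover : A ×ˢ B ⊆
      A' ×ˢ B' ∪ (Prod.fst ⁻¹' (A \ A') ∪ Prod.snd ⁻¹' (B \ B')) := by
    rintro ⟨x, y⟩ ⟨hx, hy⟩
    by_cases hx' : x ∈ A' <;> by_cases hy' : y ∈ B' <;> simp_all
  calc π (A ×ˢ B)
      ≤ π (A' ×ˢ B' ∪ (Prod.fst ⁻¹' (A \ A') ∪ Prod.snd ⁻¹' (B \ B'))) := measure_mono hcover
    _ ≤ π (A' ×ˢ B') + (π (Prod.fst ⁻¹' (A \ A')) + π (Prod.snd ⁻¹' (B \ B'))) :=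
        (measure_union_le _ _).trans (by gcongr; exact measure_union_le _ _)
    _ ≤ π (A' ×ˢ B') + (μ (A \ A') + ν (B \ B')) := by gcongr

lemma measure_prod_add_measure_prod_compl (h : IsCoupling π μ ν) {A : Set X} {B : Set Y}
    (hA : MeasurableSet A) (hB : MeasurableSet B) : π (A ×ˢ B) + π (A ×ˢ Bᶜ) = μ A := by
  have hdisj : Disjoint (A ×ˢ B) (A ×ˢ Bᶜ) := disjoint_prod.mpr (.inr disjoint_compl_right)
  rw [← measure_union hdisj (hA.prod hB.compl), ← prod_union, union_compl_self, prod_univ,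
    ← Measure.fst_apply hA, h.fst_eq]

lemma measure_prod_eq_sub [IsFiniteMeasure π] (h : IsCoupling π μ ν) {A : Set X} {B : Set Y}
    (hA : MeasurableSet A) (hB : MeasurableSet B) : π (A ×ˢ B) = μ A - π (A ×ˢ Bᶜ) :=
  ENNReal.eq_sub_of_add_eq (measure_ne_top _ _) (h.measure_prod_add_measure_prod_compl hA hB)

section WeakConvergence

variable [TopologicalSpace X] [TopologicalSpace Y]

section Rectangles

variable [OpensMeasurableSpace X] [OpensMeasurableSpace Y] [OpensMeasurableSpace (X × Y)]
  [HasOuterApproxClosed (X × Y)] [μ.WeaklyRegular] [ν.WeaklyRegular]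
  {L : Filter ι} {ρ : ι → FiniteMeasure (X × Y)} {π : FiniteMeasure (X × Y)}
  {A : Set X} {B : Set Y}

lemma limsup_measure_prod_le [IsFiniteMeasure μ] [IsFiniteMeasure ν]
    (hρ : ∀ i, IsCoupling (ρ i : Measure (X × Y)) μ ν) (hlim : Tendsto ρ L (𝓝 π))
    (hA : MeasurableSet A) (hB : MeasurableSet B) :
    limsup (fun i ↦ (ρ i : Measure (X × Y)) (A ×ˢ B)) L ≤ (π : Measure (X × Y)) (A ×ˢ B) := by
  rcases L.eq_or_neBot with rfl | _
  · simp
  refine ENNReal.le_of_forall_pos_le_add fun ε hε _ ↦ ?_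
  have hε' : (ε / 2 : ℝ≥0∞) ≠ 0 := by simp [hε.ne']
  obtain ⟨F, hFA, hF, hAF⟩ := hA.exists_isClosed_sdiff_lt (measure_ne_top μ A) hε'
  obtain ⟨G, hGB, hG, hBG⟩ := hB.exists_isClosed_sdiff_lt (measure_ne_top ν B) hε'
  have happrox (i : ι) :
      (ρ i : Measure (X × Y)) (A ×ˢ B) ≤ (ρ i : Measure (X × Y)) (F ×ˢ G) + ε := by
    grw [(hρ i).measure_prod_le_add_sdiff A F B G, hAF, hBG, ENNReal.add_halves]
  calc limsup (fun i ↦ (ρ i : Measure (X × Y)) (A ×ˢ B)) L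
      ≤ limsup (fun i ↦ (ρ i : Measure (X × Y)) (F ×ˢ G) + ε) L :=
        limsup_le_limsup (.of_forall happrox)
    _ = limsup (fun i ↦ (ρ i : Measure (X × Y)) (F ×ˢ G)) L + ε := by
        apply limsup_add_const <;> isBoundedDefault
    _ ≤ (π : Measure (X × Y)) (F ×ˢ G) + ε := by
        gcongr
        exact FiniteMeasure.limsup_measure_closed_le_of_tendsto hlim (hF.prod hG)
    _ ≤ (π : Measure (X × Y)) (A ×ˢ B) + ε := by gcongr

theorem tendsto_measure_prod (hρ : ∀ i, IsCoupling (ρ i : Measure (X × Y)) μ ν)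
    (hπ : IsCoupling (π : Measure (X × Y)) μ ν) (hlim : Tendsto ρ L (𝓝 π))
    (hA : MeasurableSet A) (hB : MeasurableSet B) :
    Tendsto (fun i ↦ (ρ i : Measure (X × Y)) (A ×ˢ B)) L (𝓝 ((π : Measure (X × Y)) (A ×ˢ B))) := by
  have := hπ.isFiniteMeasure_left
  have := hπ.isFiniteMeasure_right
  rcases L.eq_or_neBot with rfl | _
  · exact tendsto_bot
  refine tendsto_of_le_liminf_of_limsup_le ?_ (limsup_measure_prod_le hρ hlim hA hB)
  simp only [(hρ _).measure_prod_eq_sub hA hB, hπ.measure_prod_eq_sub hA hB]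
  rw [ENNReal.liminf_const_sub L _ (measure_ne_top μ A)]
  exact tsub_le_tsub_left (limsup_measure_prod_le hρ hlim hA hB.compl) _

end Rectangles

variable [BorelSpace X] [BorelSpace Y]

lemma isClosed_setOf [OpensMeasurableSpace (X × Y)] [HasOuterApproxClosed X]
    [HasOuterApproxClosed Y] (μ : ProbabilityMeasure X) (ν : ProbabilityMeasure Y) :
    IsClosed {π : ProbabilityMeasure (X × Y) | IsCoupling (π : Measure (X × Y)) μ ν} := by
  have hfst : IsClosed {π : ProbabilityMeasure (X × Y) |
      π.map continuous_fst.measurable.aemeasurable = μ} :=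
    isClosed_singleton.preimage (ProbabilityMeasure.continuous_map continuous_fst)
  have hsnd : IsClosed {π : ProbabilityMeasure (X × Y) |
      π.map continuous_snd.measurable.aemeasurable = ν} :=
    isClosed_singleton.preimage (ProbabilityMeasure.continuous_map continuous_snd)
  convert hfst.inter hsnd using 1
  ext π
  exact ⟨fun h ↦ ⟨Subtype.ext h.fst_eq, Subtype.ext h.snd_eq⟩,
    fun h ↦ ⟨congrArg Subtype.val h.1, congrArg Subtype.val h.2⟩⟩

lemma isTightMeasureSet_setOf [PolishSpace X] [PolishSpace Y] (μ : Measure X) (ν : Measure Y)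
    [IsFiniteMeasure μ] [IsFiniteMeasure ν] :
    IsTightMeasureSet {π : Measure (X × Y) | IsCoupling π μ ν} := by
  refine .prodMk (isTightMeasureSet_singleton (μ := μ) |>.subset ?_)
    (isTightMeasureSet_singleton (μ := ν) |>.subset ?_)
  · exact image_subset_iff.mpr fun _ h ↦ h.fst_eq
  · exact image_subset_iff.mpr fun _ h ↦ h.snd_eq

theorem isCompact_setOf [PolishSpace X] [PolishSpace Y] (μ : ProbabilityMeasure X)
    (ν : ProbabilityMeasure Y) :
    IsCompact {π : ProbabilityMeasure (X × Y) | IsCoupling (π : Measure (X × Y)) μ ν} := by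
  rw [← (isClosed_setOf μ ν).closure_eq]
  refine isCompact_closure_of_isTightMeasureSet ((isTightMeasureSet_setOf μ ν).subset ?_)
  rintro _ ⟨π, hπ, rfl⟩
  exact hπ

end WeakConvergence

theorem exists_subseq_tendsto_measure_prod [StandardBorelSpace X] [StandardBorelSpace Y]
    [IsProbabilityMeasure μ] {ρ : ℕ → Measure (X × Y)} (hρ : ∀ n, IsCoupling (ρ n) μ ν) :
    ∃ (φ : ℕ → ℕ) (π : Measure (X × Y)), StrictMono φ ∧ IsCoupling π μ ν ∧
      ∀ A B, MeasurableSet A → MeasurableSet B →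
        Tendsto (fun i ↦ ρ (φ i) (A ×ˢ B)) atTop (𝓝 (π (A ×ˢ B))) := by
  let := upgradeStandardBorel X
  let := upgradeStandardBorel Y
  have hprob (n : ℕ) : IsProbabilityMeasure (ρ n) := (hρ n).isProbabilityMeasure
  have : IsProbabilityMeasure ν := (hρ 0).snd_eq ▸ inferInstance
  let P (n : ℕ) : ProbabilityMeasure (X × Y) := ⟨ρ n, hprob n⟩
  obtain ⟨π, hπ, φ, hφ, hlim⟩ :=
    (isCompact_setOf ⟨μ, ‹_›⟩ ⟨ν, ‹_›⟩).tendsto_subseq (x := P) hρ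
  refine ⟨φ, π, hφ, hπ, fun A B hA hB ↦ ?_⟩
  exact tendsto_measure_prod (ρ := fun i ↦ (P (φ i)).toFiniteMeasure) (π := π.toFiniteMeasure)
    (fun i ↦ hρ (φ i)) hπ
    ((ProbabilityMeasure.tendsto_nhds_iff_toFiniteMeasure_tendsto_nhds _).mp hlim) hA hB

end IsCoupling

theorem stmt_15_general [StandardBorelSpace X] [StandardBorelSpace Y] [IsFiniteMeasure μ]
    {ρ : ℕ → Measure (X × Y)} (hρ : ∀ n, IsCoupling (ρ n) μ ν) :
    ∃ (φ : ℕ → ℕ) (π : Measure (X × Y)), StrictMono φ ∧ IsCoupling π μ ν ∧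
      ∀ A B, MeasurableSet A → MeasurableSet B →
        Tendsto (fun i ↦ ρ (φ i) (A ×ˢ B)) atTop (𝓝 (π (A ×ˢ B))) := by
  rcases eq_or_ne μ 0 with rfl | hμ
  · exact ⟨id, ρ 0, strictMono_id, hρ 0, by simp [(hρ _).eq_zero]⟩
  have : NeZero μ := ⟨hμ⟩
  have hmul : μ univ * (μ univ)⁻¹ = 1 :=
    ENNReal.mul_inv_cancel (NeZero.ne _) (measure_ne_top _ _)
  obtain ⟨φ, π, hφ, hπ, hlim⟩ :=
    IsCoupling.exists_subseq_tendsto_measure_prod fun n ↦ (hρ n).smul (μ univ)⁻¹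
  refine ⟨φ, μ univ • π, hφ, ?_, fun A B hA hB ↦ ?_⟩
  · simpa only [smul_smul, hmul, one_smul] using hπ.smul (μ univ)
  · simpa only [Measure.smul_apply, smul_eq_mul, ← mul_assoc, hmul, one_mul] using
      ENNReal.Tendsto.const_mul (hlim A B hA hB) (.inr (measure_ne_top μ univ))

end Couplings

/-- **Compactness of couplings.** Let `λ₁, λ₂` be Borel probability measures on a standard
Borel space `J`, and let `μ_n` be measures on `J × J` coupling `λ₁` and `λ₂`. Then there is a
subsequence `n₁ < n₂ < ⋯` and a coupling `μ` of `λ₁` and `λ₂` such that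
`μ_{n_i}(A × B) → μ(A × B)` for all Borel sets `A, B`. -/
theorem stmt_15 {J : Type*} [MeasurableSpace J] [StandardBorelSpace J]
    (lam₁ lam₂ : Measure J) [IsProbabilityMeasure lam₁] [IsProbabilityMeasure lam₂]
    (μ : ℕ → Measure (J × J))
    (h1 : ∀ n, (μ n).fst = lam₁) (h2 : ∀ n, (μ n).snd = lam₂) :
    ∃ (φ : ℕ → ℕ) (ν : Measure (J × J)), StrictMono φ ∧ ν.fst = lam₁ ∧ ν.snd = lam₂ ∧
      ∀ A B : Set J, MeasurableSet A → MeasurableSet B →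
        Filter.Tendsto (fun i => μ (φ i) (A ×ˢ B)) Filter.atTop (nhds (ν (A ×ˢ B))) := by
  obtain ⟨φ, π, hφ, hπ, hlim⟩ := stmt_15_general fun n ↦ ⟨h1 n, h2 n⟩
  exact ⟨φ, π, hφ, hπ.fst_eq, hπ.snd_eq, hlim⟩
end
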